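/- Let C be a finite category, c an object, and let J be a J-class of the consolidation monoid C^cd such that J ∩ C_c is nonempty. Then J ∩ C_c is a single J-class of the monoid C_c = C(c,c). -/

import Mathlib

/-- A finite category presented by its set of arrows with a partial composition. -/
structure FinCat (Obj : Type) where
  Arr : Type
  src : Arr → Obj
  tgt : Arr → Obj
  id : Obj → Arr
  comp : (f g : Arr) → tgt f = src g → Arr
  src_id : ∀ a, src (id a) = a
  tgt_id : ∀ a, tgt (id a) = a
  src_comp : ∀ f g h, src (comp f g h) = src f
  tgt_comp : ∀ f g h, tgt (comp f g h) = tgt g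
  id_comp : ∀ (f : Arr) (h : tgt (id (src f)) = src f), comp (id (src f)) f h = f
  comp_id : ∀ (f : Arr) (h : tgt f = src (id (tgt f))), comp f (id (tgt f)) h = f
  assoc : ∀ (f g k : Arr) (h1 : tgt f = src g) (h2 : tgt g = src k) h3 h4,
    comp (comp f g h1) k h3 = comp f (comp g k h2) h4

/-- The underlying set of the consolidation monoid `C^cd`:
arrows of `C` together with an adjoined zero and identity. -/
inductive Cd {Obj : Type} (C : FinCat Obj) where
  | zero : Cd C
  | one : Cd C
  | arr : C.Arr → Cd C

variable {Obj : Type} [DecidableEq Obj]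

/-- Multiplication of the consolidation: composition where defined, `0` otherwise,
with `1` an adjoined identity and `0` absorbing. -/
def cdMul (C : FinCat Obj) : Cd C → Cd C → Cd C
  | .one, x => x
  | .zero, _ => .zero
  | x, .one => x
  | _, .zero => .zero
  | .arr f, .arr g => if h : C.tgt f = C.src g then .arr (C.comp f g h) else .zero

theorem cdMul_zero (C : FinCat Obj) (x : Cd C) : cdMul C x Cd.zero = Cd.zero := by
  cases x <;> rfl
theorem cdZero_mul (C : FinCat Obj) (x : Cd C) : cdMul C Cd.zero x = Cd.zero := by
  cases x <;> rfl
theorem cdMul_one (C : FinCat Obj) (x : Cd C) : cdMul C x Cd.one = x := by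
  cases x <;> rfl
theorem cdOne_mul (C : FinCat Obj) (x : Cd C) : cdMul C Cd.one x = x := by
  cases x <;> rfl

theorem cdMul_assoc (C : FinCat Obj) (x y z : Cd C) :
    cdMul C (cdMul C x y) z = cdMul C x (cdMul C y z) := by
  cases x <;> cases y <;> cases z <;>
    (try simp only [cdMul_zero, cdZero_mul, cdMul_one, cdOne_mul]) <;> (try rfl)
  case arr.arr.arr f g k =>
    by_cases h1 : C.tgt f = C.src g
    · by_cases h2 : C.tgt g = C.src k
      · show cdMul C (dite _ _ _) _ = cdMul C _ (dite _ _ _)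
        rw [dif_pos h1, dif_pos h2]
        show dite _ _ _ = dite _ _ _
        rw [dif_pos (show C.tgt (C.comp f g h1) = C.src k by rw [C.tgt_comp]; exact h2),
            dif_pos (show C.tgt f = C.src (C.comp g k h2) by rw [C.src_comp]; exact h1)]
        exact congrArg Cd.arr (C.assoc f g k h1 h2 _ _)
      · show cdMul C (dite _ _ _) _ = cdMul C _ (dite _ _ _)
        rw [dif_pos h1, dif_neg h2]
        show dite _ _ _ = Cd.zero
        rw [dif_neg (show ¬ C.tgt (C.comp f g h1) = C.src k by rw [C.tgt_comp]; exact h2)]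
    · show cdMul C (dite _ _ _) _ = cdMul C _ (cdMul C _ _)
      rw [dif_neg h1]
      by_cases h2 : C.tgt g = C.src k
      · show Cd.zero = cdMul C _ (dite _ _ _)
        rw [dif_pos h2]
        show Cd.zero = dite _ _ _
        rw [dif_neg (show ¬ C.tgt f = C.src (C.comp g k h2) by rw [C.src_comp]; exact h1)]
      · show Cd.zero = cdMul C _ (dite _ _ _)
        rw [dif_neg h2, cdMul_zero]

instance cdMonoid (C : FinCat Obj) : Monoid (Cd C) where
  mul := cdMul C
  one := .one
  one_mul x := by cases x <;> rfl
  mul_one x := by cases x <;> rfl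
  mul_assoc := cdMul_assoc C

/-- Green's R-equivalence in a monoid. -/
def RE {M : Type} [Monoid M] (s t : M) : Prop := (∃ a, s * a = t) ∧ (∃ a, t * a = s)
/-- Green's L-equivalence in a monoid. -/
def LE' {M : Type} [Monoid M] (s t : M) : Prop := (∃ a, a * s = t) ∧ (∃ a, a * t = s)
/-- Green's H-equivalence in a monoid. -/
def HE {M : Type} [Monoid M] (s t : M) : Prop := RE s t ∧ LE' s t
/-- Green's J-equivalence in a monoid. -/
def JE {M : Type} [Monoid M] (s t : M) : Prop :=
  (∃ a b, a * s * b = t) ∧ (∃ a b, a * t * b = s)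

/-- Green's R-equivalence relative to a subset `S` (multipliers taken in `S`). -/
def REOn {M : Type} [Monoid M] (S : Set M) (s t : M) : Prop :=
  (∃ a ∈ S, s * a = t) ∧ (∃ a ∈ S, t * a = s)
def LEOn {M : Type} [Monoid M] (S : Set M) (s t : M) : Prop :=
  (∃ a ∈ S, a * s = t) ∧ (∃ a ∈ S, a * t = s)
def HEOn {M : Type} [Monoid M] (S : Set M) (s t : M) : Prop := REOn S s t ∧ LEOn S s t
def JEOn {M : Type} [Monoid M] (S : Set M) (s t : M) : Prop :=
  (∃ a ∈ S, ∃ b ∈ S, a * s * b = t) ∧ (∃ a ∈ S, ∃ b ∈ S, a * t * b = s)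

/-- The local monoid `C_c = C(c,c)`, viewed as a subset of the consolidation. -/
def locSet (C : FinCat Obj) (c : Obj) : Set (Cd C) :=
  {x | ∃ f : C.Arr, x = Cd.arr f ∧ C.src f = c ∧ C.tgt f = c}

/-!
The local monoid `C(c,c)` is the corner `e M e` of `M = C^cd` at the idempotent `e = id c`, with
zero removed. If `s` and `t` lie in that corner and `a * s * b = t`, then
`(e * a * e) * s * (e * b * e) = t`, and both multipliers are nonzero as soon as `t` is. Hence
J-equivalence in `M` between nonzero elements of a corner is witnessed inside the corner.
-/

theorem exists_mul_mul_eq_trans {M : Type*} [Semigroup M] {s t u : M}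
    (hst : ∃ a b, a * s * b = t) (htu : ∃ a b, a * t * b = u) : ∃ a b, a * s * b = u := by
  obtain ⟨a, b, rfl⟩ := hst
  obtain ⟨p, q, rfl⟩ := htu
  exact ⟨p * a, b * q, by simp only [mul_assoc]⟩

section Green

variable {M : Type} [Monoid M] {s t u : M}

theorem JE.symm (h : JE s t) : JE t s := And.symm h

theorem JE.trans (hst : JE s t) (htu : JE t u) : JE s u :=
  ⟨exists_mul_mul_eq_trans hst.1 htu.1, exists_mul_mul_eq_trans htu.2 hst.2⟩

theorem JEOn.je {S : Set M} (h : JEOn S s t) : JE s t := by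
  obtain ⟨⟨a, -, b, -, hab⟩, p, -, q, -, hpq⟩ := h
  exact ⟨⟨a, b, hab⟩, p, q, hpq⟩

end Green

section Corner

open Subsemigroup (corner mem_corner_iff)

theorem corner_mul_mul_corner_of_mem_corner {M : Type*} [Semigroup M] {e s : M}
    (he : IsIdempotentElem e) (hs : s ∈ corner e) (a b : M) :
    (e * a * e) * s * (e * b * e) = e * (a * s * b) * e := by
  obtain ⟨hes, hse⟩ := (mem_corner_iff he).mp hs
  calc (e * a * e) * s * (e * b * e)
      = e * (a * (e * s * e) * b) * e := by simp only [mul_assoc]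
    _ = e * (a * s * b) * e := by rw [hes, hse]

theorem exists_mem_corner_diff_zero_mul_mul_eq {M : Type*} [SemigroupWithZero M] {e s t : M}
    (he : IsIdempotentElem e) (hs : s ∈ corner e) (ht : t ∈ (corner e : Set M) \ {0})
    (hst : ∃ a b, a * s * b = t) :
    ∃ a ∈ (corner e : Set M) \ {0}, ∃ b ∈ (corner e : Set M) \ {0}, a * s * b = t := by
  obtain ⟨a, b, hab⟩ := hst
  obtain ⟨het, hte⟩ := (mem_corner_iff he).mp ht.1
  have hcorner : (e * a * e) * s * (e * b * e) = t := by
    rw [corner_mul_mul_corner_of_mem_corner he hs, hab, het, hte]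
  have hne : (e * a * e) * s * (e * b * e) ≠ 0 := hcorner ▸ ht.2
  exact ⟨e * a * e, ⟨⟨a, rfl⟩, left_ne_zero_of_mul (left_ne_zero_of_mul hne)⟩,
    e * b * e, ⟨⟨b, rfl⟩, right_ne_zero_of_mul hne⟩, hcorner⟩

theorem jeOn_corner_diff_zero_iff {M : Type} [MonoidWithZero M] {e s t : M}
    (he : IsIdempotentElem e) (hs : s ∈ (corner e : Set M) \ {0})
    (ht : t ∈ (corner e : Set M) \ {0}) :
    JEOn ((corner e : Set M) \ {0}) s t ↔ JE s t :=
  ⟨JEOn.je, fun h ↦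
    ⟨exists_mem_corner_diff_zero_mul_mul_eq he hs.1 ht h.1,
      exists_mem_corner_diff_zero_mul_mul_eq he ht.1 hs h.2⟩⟩

end Corner

namespace Cd

/-- The consolidation as a monoid with zero. It extends `cdMonoid`, so that Green's relations for
the two instances agree definitionally. -/
instance instMonoidWithZero (C : FinCat Obj) : MonoidWithZero (Cd C) where
  __ := cdMonoid C
  zero := .zero
  zero_mul := cdZero_mul C
  mul_zero := cdMul_zero C

variable {C : FinCat Obj} {c : Obj}

theorem arr_mul_arr (f g : C.Arr) :
    (arr f * arr g : Cd C) = if h : C.tgt f = C.src g then arr (C.comp f g h) else 0 :=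
  rfl

theorem arr_ne_zero (f : C.Arr) : (arr f : Cd C) ≠ 0 := nofun

theorem arr_ne_one (f : C.Arr) : (arr f : Cd C) ≠ 1 := nofun

theorem arr_id_mul_arr_eq_iff {f : C.Arr} :
    (arr (C.id c) * arr f : Cd C) = arr f ↔ C.src f = c := by
  constructor
  · intro h
    by_contra hc
    rw [arr_mul_arr, dif_neg (by rw [C.tgt_id]; exact Ne.symm hc)] at h
    exact arr_ne_zero f h.symm
  · rintro rfl
    rw [arr_mul_arr, dif_pos (C.tgt_id _), C.id_comp]

theorem arr_mul_arr_id_eq_iff {f : C.Arr} :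
    (arr f * arr (C.id c) : Cd C) = arr f ↔ C.tgt f = c := by
  constructor
  · intro h
    by_contra hc
    rw [arr_mul_arr, dif_neg (by rwa [C.src_id])] at h
    exact arr_ne_zero f h.symm
  · rintro rfl
    rw [arr_mul_arr, dif_pos (C.src_id _).symm, C.comp_id]

variable (C c) in
theorem isIdempotentElem_arr_id : IsIdempotentElem (arr (C.id c) : Cd C) :=
  arr_id_mul_arr_eq_iff.mpr (C.src_id c)

omit [DecidableEq Obj] in
theorem arr_mem_locSet_iff {f : C.Arr} : arr f ∈ locSet C c ↔ C.src f = c ∧ C.tgt f = c := by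
  simp [locSet]

variable (C c) in
theorem locSet_eq_corner_diff_zero :
    locSet C c = (Subsemigroup.corner (arr (C.id c) : Cd C) : Set (Cd C)) \ {0} := by
  ext x
  rw [Set.mem_sdiff, SetLike.mem_coe, Subsemigroup.mem_corner_iff (isIdempotentElem_arr_id C c)]
  cases x with
  | zero => exact iff_of_false (fun ⟨_, h, _⟩ ↦ nomatch h) (fun h ↦ h.2 rfl)
  | one =>
    exact iff_of_false (fun ⟨_, h, _⟩ ↦ nomatch h)
      (fun h ↦ arr_ne_one _ ((mul_one _).symm.trans h.1.1))
  | arr f =>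
    rw [arr_mem_locSet_iff, arr_id_mul_arr_eq_iff, arr_mul_arr_id_eq_iff]
    exact (and_iff_left (arr_ne_zero f)).symm

theorem jeOn_locSet_iff {s t : Cd C} (hs : s ∈ locSet C c) (ht : t ∈ locSet C c) :
    JEOn (locSet C c) s t ↔ JE s t := by
  rw [locSet_eq_corner_diff_zero] at hs ht ⊢
  exact jeOn_corner_diff_zero_iff (isIdempotentElem_arr_id C c) hs ht

end Cd

theorem stmt_9_general (C : FinCat Obj) (c : Obj)
    (J : Set (Cd C)) (hJ : ∃ w : Cd C, J = {z | JE z w})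
    (x : Cd C) (hx : x ∈ J ∩ locSet C c) :
    J ∩ locSet C c = {z ∈ locSet C c | JEOn (locSet C c) z x} := by
  obtain ⟨w, rfl⟩ := hJ
  obtain ⟨hxw : JE x w, hxc⟩ := hx
  ext z
  constructor
  · rintro ⟨hzw : JE z w, hzc⟩
    exact ⟨hzc, (Cd.jeOn_locSet_iff hzc hxc).mpr (hzw.trans hxw.symm)⟩
  · rintro ⟨hzc, hzx⟩
    exact ⟨hzx.je.trans hxw, hzc⟩

/-- if `J` is a J-class of `C^cd` meeting the local monoid `C_c`,
then `J ∩ C_c` is a single J-class of the monoid `C_c`. -/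
theorem stmt_9 (C : FinCat Obj) [Fintype Obj] [Fintype C.Arr] (c : Obj)
    (J : Set (Cd C)) (hJ : ∃ w : Cd C, J = {z | JE z w})
    (x : Cd C) (hx : x ∈ J ∩ locSet C c) :
    J ∩ locSet C c = {z ∈ locSet C c | JEOn (locSet C c) z x} :=
  stmt_9_general C c J hJ x hx
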